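/- Let p be an odd prime, f ≥ 1 an integer, q = p^f, and M = 2p^{f-1}. Let n_0, n_1, ..., n_M be natural numbers with Σ_{i=0}^{M} n_i = q and Σ_{i=1}^{M} i·n_i ≤ 2p^{f-1} - 1. If the p-adic valuation of the multinomial coefficient q!/(n_0!·n_1!···n_M!) is at most 1, then either n_0 = q and n_i = 0 for all 1 ≤ i ≤ M, or n_0 = (p-1)·p^{f-1}, n_1 = p^{f-1} and n_i = 0 for all 2 ≤ i ≤ M. -/

import Mathlib

/-!
The multinomial coefficient times any `n i` is divisible by `∑ i, n i = p ^ f`, so if its valuation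
is at most `1`, then every `n i` is a multiple of `d = p ^ (f - 1)`. The weight `∑ i, i * n i` is
then a multiple of `d` less than `2 * d`: either it is `0` and all the mass sits at `0`, or it is
`d` and exactly `d` units sit at `1`, the other `(p - 1) * d` at `0`.
-/

lemma dvd_choose_mul (m k : ℕ) : m ∣ m.choose k * k := by
  cases m with
  | zero => cases k <;> simp
  | succ m =>
    cases k with
    | zero => simp
    | succ k => exact ⟨m.choose k, (Nat.add_one_mul_choose_eq m k).symm⟩

section Multinomial

variable {ι : Type*} {s : Finset ι} {i : ι}

lemma choose_dvd_multinomial (n : ι → ℕ) (hi : i ∈ s) :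
    (∑ j ∈ s, n j).choose (n i) ∣ Nat.multinomial s n := by
  classical
  have hmul := Nat.multinomial_insert (Finset.notMem_erase i s) n
  rw [Finset.insert_erase hi, Finset.add_sum_erase s n hi] at hmul
  exact Dvd.intro _ hmul.symm

lemma sum_dvd_multinomial_mul (n : ι → ℕ) (hi : i ∈ s) :
    ∑ j ∈ s, n j ∣ Nat.multinomial s n * n i :=
  (dvd_choose_mul _ _).trans (Nat.mul_dvd_mul_right (choose_dvd_multinomial n hi) _)

lemma pow_dvd_of_pow_add_dvd_sum_of_padicValNat_multinomial_le {p k v : ℕ} [Fact p.Prime]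
    {n : ι → ℕ} (hsum : p ^ (k + v) ∣ ∑ j ∈ s, n j)
    (hval : padicValNat p (Nat.multinomial s n) ≤ v) (hi : i ∈ s) : p ^ k ∣ n i := by
  rcases eq_or_ne (n i) 0 with hzero | hne
  · simp [hzero]
  have hmult : Nat.multinomial s n ≠ 0 := (Nat.multinomial_pos s n).ne'
  have hle : k + v ≤ padicValNat p (Nat.multinomial s n) + padicValNat p (n i) := by
    rw [← padicValNat.mul hmult hne, ← padicValNat_dvd_iff_le (mul_ne_zero hmult hne)]
    exact hsum.trans (sum_dvd_multinomial_mul n hi)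
  exact (padicValNat_dvd_iff_le hne).2 (by lia)

end Multinomial

section Weight

variable {s : Finset ℕ} {n : ℕ → ℕ}

lemma sum_Icc_one_mul_eq_sum_range_succ (M : ℕ) (n : ℕ → ℕ) :
    ∑ i ∈ Finset.Icc 1 M, i * n i = ∑ i ∈ Finset.range (M + 1), i * n i :=
  Finset.sum_subset (by grind) (by grind)

lemma zero_mem_of_sum_mul_lt_sum (hlt : ∑ i ∈ s, i * n i < ∑ i ∈ s, n i) : 0 ∈ s := by
  by_contra hzero
  refine hlt.not_ge (Finset.sum_le_sum fun i hi => Nat.le_mul_of_pos_left _ ?_)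
  exact Nat.pos_of_ne_zero (ne_of_mem_of_not_mem hi hzero)

lemma eq_zero_or_eq_of_dvd_of_sum_mul_lt {d : ℕ} (hdvd : ∀ i ∈ s, d ∣ n i)
    (hlt : ∑ i ∈ s, i * n i < 2 * d) :
    (∀ i ∈ s, 1 ≤ i → n i = 0) ∨ (1 ∈ s ∧ n 1 = d ∧ ∀ i ∈ s, 2 ≤ i → n i = 0) := by
  have hterm : ∀ i ∈ s, i * n i < 2 * d := fun i hi =>
    (Finset.single_le_sum_of_canonicallyOrdered (f := fun i => i * n i) hi).trans_lt hlt
  have htwo : ∀ i ∈ s, 2 ≤ i → n i = 0 := fun i hi hi2 =>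
    Nat.eq_zero_of_dvd_of_lt (hdvd i hi) <| Nat.lt_of_mul_lt_mul_left <|
      (Nat.mul_le_mul_right _ hi2).trans_lt (hterm i hi)
  by_cases hone : 1 ∈ s ∧ n 1 ≠ 0
  · obtain ⟨hmem, hne⟩ := hone
    have hlt1 : n 1 < 2 * d := by simpa using hterm 1 hmem
    exact .inr ⟨hmem, Nat.eq_of_dvd_of_lt_two_mul hne (hdvd 1 hmem) hlt1, htwo⟩
  · left
    intro i hi hi1
    rcases hi1.eq_or_lt with rfl | hi2
    · by_contra hne
      exact hone ⟨hi, hne⟩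
    · exact htwo i hi hi2

end Weight

theorem statement4_general {p k : ℕ} (hp : p.Prime) {s : Finset ℕ} {n : ℕ → ℕ}
    (hsum : ∑ i ∈ s, n i = p ^ (k + 1)) (hwt : ∑ i ∈ s, i * n i < 2 * p ^ k)
    (hval : padicValNat p (Nat.multinomial s n) ≤ 1) :
    (n 0 = p ^ (k + 1) ∧ ∀ i ∈ s, 1 ≤ i → n i = 0) ∨
    (n 0 = (p - 1) * p ^ k ∧ n 1 = p ^ k ∧ ∀ i ∈ s, 2 ≤ i → n i = 0) := by
  have : Fact p.Prime := ⟨hp⟩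
  have hdvd : ∀ i ∈ s, p ^ k ∣ n i := fun i hi =>
    pow_dvd_of_pow_add_dvd_sum_of_padicValNat_multinomial_le hsum.symm.dvd hval hi
  have hzero : 0 ∈ s := zero_mem_of_sum_mul_lt_sum <| hwt.trans_le <| by
    rw [hsum, pow_succ']
    exact Nat.mul_le_mul_right _ hp.two_le
  rcases eq_zero_or_eq_of_dvd_of_sum_mul_lt hdvd hwt with hpos | ⟨hone, hn1, htwo⟩
  · have hn0 : ∑ i ∈ s, n i = n 0 :=
      Finset.sum_eq_single_of_mem 0 hzero fun i hi hi0 => hpos i hi (Nat.pos_of_ne_zero hi0)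
    exact .inl ⟨hn0 ▸ hsum, hpos⟩
  · have hn01 : ∑ i ∈ s, n i = n 0 + n 1 :=
      Finset.sum_eq_add_of_mem 0 1 hzero hone zero_ne_one fun i hi hi01 => htwo i hi (by lia)
    refine .inr ⟨?_, hn1, htwo⟩
    rw [Nat.sub_one_mul, ← pow_succ', ← hsum, hn01, hn1, Nat.add_sub_cancel]

/-- Let `p` be an odd prime, `q = p^f`, `M = 2p^{f-1}`.  If `n_0 + ... + n_M = q`,
`Σ_{i=1}^{M} i·n_i ≤ 2p^{f-1} - 1`, and the `p`-adic valuation of the multinomial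
coefficient `q!/(n_0!···n_M!)` is at most `1`, then either `n_0 = q` and all other `n_i`
vanish, or `n_0 = (p-1)p^{f-1}`, `n_1 = p^{f-1}` and `n_i = 0` for `2 ≤ i ≤ M`. -/
theorem statement4 (p f : ℕ) (hp : p.Prime) (hodd : Odd p) (hf : 1 ≤ f)
    (n : ℕ → ℕ)
    (hsum : ∑ i ∈ Finset.range (2 * p ^ (f - 1) + 1), n i = p ^ f)
    (hwt : ∑ i ∈ Finset.Icc 1 (2 * p ^ (f - 1)), i * n i ≤ 2 * p ^ (f - 1) - 1)
    (hval : padicValNat p (Nat.multinomial (Finset.range (2 * p ^ (f - 1) + 1)) n) ≤ 1) :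
    (n 0 = p ^ f ∧ ∀ i, 1 ≤ i → i ≤ 2 * p ^ (f - 1) → n i = 0) ∨
    (n 0 = (p - 1) * p ^ (f - 1) ∧ n 1 = p ^ (f - 1) ∧
      ∀ i, 2 ≤ i → i ≤ 2 * p ^ (f - 1) → n i = 0) := by
  obtain ⟨k, rfl⟩ := Nat.exists_eq_add_of_le' hf
  have hlt := Nat.lt_of_le_sub_one (Nat.mul_pos two_pos (pow_pos hp.pos k)) hwt
  simpa [Nat.lt_succ_iff, imp.swap] using
    statement4_general hp hsum (sum_Icc_one_mul_eq_sum_range_succ _ n ▸ hlt) hval
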